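/- arXiv:2505.17393 — 5 statements merged into one kernel-verified Lean document; each statement's English description precedes it below -/
import Mathlib

section
/- The Gaussian spectral mixture kernel k_g (viewed as a complex-valued function of the difference τ) is positive definite on ℝ^d: for every n ∈ ℕ, all points x_1,…,x_n ∈ ℝ^d and all coefficients c_1,…,c_n ∈ ℂ, the sum Σ_{i,j=1}^n c_i conj(c_j) k_g(x_i − x_j) is a nonnegative real number. -/
open Matrix
open scoped RealInnerProductSpace ComplexOrder BigOperators

/-- The Gaussian spectral mixture kernel
`k_g(τ) = ∑_q w_q exp(-2π² τᵀ Σ_q τ) cos(2π τᵀ μ_q)`. -/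
noncomputable def gsmKernel {d Q : ℕ} (w : Fin Q → ℝ)
    (μ : Fin Q → EuclideanSpace ℝ (Fin d)) (M : Fin Q → Matrix (Fin d) (Fin d) ℝ)
    (τ : EuclideanSpace ℝ (Fin d)) : ℝ :=
  ∑ q, w q * Real.exp (-2 * Real.pi ^ 2 *
      dotProduct (fun i => τ i) ((M q).mulVec fun i => τ i)) *
    Real.cos (2 * Real.pi * ⟪τ, μ q⟫)

/-!
Each component of the kernel is the real part of a Gaussian characteristic function at `2π τ`.
The functions `τ ↦ exp(i φ(τ))` with `φ` additive are positive definite, because their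
quadratic forms are squared moduli `|∑ c_i exp(i φ(x_i))|²`; positive definiteness is then
inherited by integrals, hence by characteristic functions, and by real parts and nonnegative
combinations.
-/

open MeasureTheory ProbabilityTheory
open scoped ComplexConjugate

/-- Positive definite functions on an additive group, in the sense of Bochner's theorem: every
quadratic form `∑ c_i conj(c_j) k(x_i - x_j)` is a nonnegative real number. In the order on `ℂ`
used here, `0 ≤ z` includes that `z` is real. -/
def IsPositiveDefinite {G : Type*} [AddGroup G] (k : G → ℂ) : Prop :=
  ∀ (n : ℕ) (x : Fin n → G) (c : Fin n → ℂ), 0 ≤ ∑ i, ∑ j, c i * conj (c j) * k (x i - x j)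

namespace IsPositiveDefinite

variable {G : Type*} [AddGroup G] {k l : G → ℂ}

lemma of_eq_mul_conj {f : G → ℂ} (h : ∀ x y, k (x - y) = f x * conj (f y)) :
    IsPositiveDefinite k := by
  intro n x c
  have sum_eq_mul_conj : ∑ i, ∑ j, c i * conj (c j) * k (x i - x j) =
      (∑ i, c i * f (x i)) * conj (∑ i, c i * f (x i)) := by
    simp only [h, map_sum, map_mul, Finset.sum_mul_sum, mul_mul_mul_comm]
  rw [sum_eq_mul_conj]
  exact mul_star_self_nonneg _

lemma exp_ofReal_mul_I (φ : G →+ ℝ) :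
    IsPositiveDefinite fun t => Complex.exp (φ t * Complex.I) :=
  of_eq_mul_conj (f := fun t => Complex.exp (φ t * Complex.I)) fun x y => by
    rw [← Complex.exp_conj, ← Complex.exp_add, map_sub, map_mul, Complex.conj_I,
      Complex.conj_ofReal]
    push_cast
    ring_nf

protected lemma add (hk : IsPositiveDefinite k) (hl : IsPositiveDefinite l) :
    IsPositiveDefinite fun t => k t + l t := by
  intro n x c
  simp only [mul_add, Finset.sum_add_distrib]
  exact add_nonneg (hk n x c) (hl n x c)

lemma const_mul (hk : IsPositiveDefinite k) {a : ℂ} (ha : 0 ≤ a) :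
    IsPositiveDefinite fun t => a * k t := by
  intro n x c
  simp only [mul_left_comm _ a, ← Finset.mul_sum]
  exact mul_nonneg ha (hk n x c)

protected lemma sum {ι : Type*} {s : Finset ι} {k : ι → G → ℂ}
    (hk : ∀ q ∈ s, IsPositiveDefinite (k q)) :
    IsPositiveDefinite fun t => ∑ q ∈ s, k q t := by
  intro n x c
  simp only [Finset.mul_sum, Finset.sum_comm (t := s)]
  exact Finset.sum_nonneg fun q hq => hk q hq n x c

protected lemma integral {Ω : Type*} [MeasurableSpace Ω] {P : Measure Ω} {k : Ω → G → ℂ}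
    (hk : ∀ ω, IsPositiveDefinite (k ω)) (hint : ∀ t, Integrable (fun ω => k ω t) P) :
    IsPositiveDefinite fun t => ∫ ω, k ω t ∂P := by
  intro n x c
  have sum_integral : ∑ i, ∑ j, c i * conj (c j) * ∫ ω, k ω (x i - x j) ∂P =
      ∫ ω, ∑ i, ∑ j, c i * conj (c j) * k ω (x i - x j) ∂P := by
    have hterm (i j) := (hint (x i - x j)).const_mul (c i * conj (c j))
    rw [integral_finsetSum _ fun i _ => integrable_finsetSum _ fun j _ => hterm i j]
    simp only [integral_finsetSum _ fun j _ => hterm _ j, integral_const_mul]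
  rw [sum_integral]
  exact integral_nonneg fun ω => hk ω n x c

protected lemma star (hk : IsPositiveDefinite k) : IsPositiveDefinite fun t => conj (k t) := by
  intro n x c
  have h := star_nonneg_iff.2 (hk n x fun i => conj (c i))
  simpa only [← starRingEnd_apply, map_sum, map_mul, Complex.conj_conj] using h

lemma re (hk : IsPositiveDefinite k) : IsPositiveDefinite fun t => ((k t).re : ℂ) := by
  have re_eq (t : G) : ((k t).re : ℂ) = 2⁻¹ * (k t + conj (k t)) := by
    rw [Complex.re_eq_add_conj, div_eq_inv_mul]
  simp only [re_eq]
  exact (hk.add hk.star).const_mul (by simp)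

lemma comp_addMonoidHom {H : Type*} [AddGroup H] (hk : IsPositiveDefinite k) (φ : H →+ G) :
    IsPositiveDefinite fun t => k (φ t) := by
  intro n x c
  simpa only [map_sub] using hk n (fun i => φ (x i)) c

end IsPositiveDefinite

lemma isPositiveDefinite_charFun {E : Type*} [NormedAddCommGroup E] [InnerProductSpace ℝ E]
    [MeasurableSpace E] [OpensMeasurableSpace E] (P : Measure E) [IsFiniteMeasure P] :
    IsPositiveDefinite (charFun P) :=
  IsPositiveDefinite.integral
    (fun ω => IsPositiveDefinite.exp_ofReal_mul_I (innerₗ E ω).toAddMonoidHom)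
    fun t => (BoundedContinuousFunction.innerProbChar t).integrable P

lemma re_charFun_multivariateGaussian {ι : Type*} [Fintype ι] [DecidableEq ι]
    {S : Matrix ι ι ℝ} (hS : S.PosSemidef) (m t : EuclideanSpace ℝ ι) :
    (charFun (multivariateGaussian m S) t).re =
      Real.exp (-(t.ofLp ⬝ᵥ S *ᵥ t.ofLp) / 2) * Real.cos ⟪t, m⟫ := by
  rw [charFun_multivariateGaussian hS, Complex.exp_re]
  simp [neg_div]

lemma gsmKernel_eq_sum_re_charFun {d Q : ℕ} (w : Fin Q → ℝ)
    (μ : Fin Q → EuclideanSpace ℝ (Fin d)) {M : Fin Q → Matrix (Fin d) (Fin d) ℝ}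
    (hM : ∀ q, (M q).PosSemidef) (τ : EuclideanSpace ℝ (Fin d)) :
    gsmKernel w μ M τ =
      ∑ q, w q * (charFun (multivariateGaussian (μ q) (M q)) ((2 * Real.pi) • τ)).re := by
  refine Finset.sum_congr rfl fun q _ => ?_
  rw [re_charFun_multivariateGaussian (hM q), mul_assoc]
  simp only [WithLp.ofLp_smul, mulVec_smul, dotProduct_smul, smul_dotProduct, smul_eq_mul,
    real_inner_smul_left]
  ring_nf

theorem gsmKernel_posDef_general {d Q : ℕ} (w : Fin Q → ℝ) (hw : ∀ q, 0 ≤ w q)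
    (μ : Fin Q → EuclideanSpace ℝ (Fin d)) (M : Fin Q → Matrix (Fin d) (Fin d) ℝ)
    (hM : ∀ q, (M q).PosSemidef) :
    IsPositiveDefinite fun τ => (gsmKernel w μ M τ : ℂ) := by
  simp only [gsmKernel_eq_sum_re_charFun w μ hM, Complex.ofReal_sum, Complex.ofReal_mul]
  refine IsPositiveDefinite.sum fun q _ => .const_mul ?_ (Complex.zero_le_real.2 (hw q))
  exact (isPositiveDefinite_charFun (multivariateGaussian (μ q) (M q))).re.comp_addMonoidHom
    (DistribSMul.toAddMonoidHom _ (2 * Real.pi))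

/-- The Gaussian spectral mixture kernel, viewed as a complex-valued function of the
difference `τ`, is positive definite on `ℝ^d`: for all points `x_1, …, x_n` and all
complex coefficients `c_1, …, c_n`, the sum `∑_{i,j} c_i conj(c_j) k_g(x_i - x_j)`
is a nonnegative real number. -/
theorem gsmKernel_posDef {d Q : ℕ} (w : Fin Q → ℝ) (hw : ∀ q, 0 ≤ w q)
    (μ : Fin Q → EuclideanSpace ℝ (Fin d)) (M : Fin Q → Matrix (Fin d) (Fin d) ℝ)
    (hsymm : ∀ q, (M q).IsSymm) (hpd : ∀ q, (M q).PosDef)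
    (n : ℕ) (x : Fin n → EuclideanSpace ℝ (Fin d)) (c : Fin n → ℂ) :
    0 ≤ ∑ i, ∑ j, c i * (starRingEnd ℂ) (c j) * (gsmKernel w μ M (x i - x j) : ℂ) :=
  gsmKernel_posDef_general w hw μ M (fun q => (hpd q).posSemidef) n x c
end

section
/- The Cauchy spectral mixture kernel k_c (viewed as a complex-valued function of the difference τ) is positive definite on ℝ^d: for every n ∈ ℕ, all points x_1,…,x_n ∈ ℝ^d and all coefficients c_1,…,c_n ∈ ℂ, the sum Σ_{i,j=1}^n c_i conj(c_j) k_c(x_i − x_j) is a nonnegative real number. -/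
/-!
Positive definite functions form a convex cone closed under pointwise products (Schur) and under
pullback along additive homomorphisms, so it suffices to treat `exp (-|t|)` and `cos t` on `ℝ`.
Both are shown to be positive definite by a feature map `φ` with `f (x - y) = ⟪φ x, φ y⟫`:
`t ↦ exp (t * I)` for the cosine, and for the exponential
`exp (-|s - t|) = exp (-s) * exp (-t) * min (exp (2 * s)) (exp (2 * t))`,
where the minimum is the `L²` inner product of the indicators of `(0, exp (2 * s)]` and
`(0, exp (2 * t)]`.
-/

open scoped RealInnerProductSpace ComplexOrder BigOperators

/-- The Cauchy spectral mixture kernel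
`k_c(τ) = ∑_q w_q exp(-2π ∑_i γ_{q,i} |τ_i|) cos(2π τᵀ η_q)`. -/
noncomputable def csmKernel {d Q : ℕ} (w : Fin Q → ℝ)
    (η : Fin Q → EuclideanSpace ℝ (Fin d)) (γ : Fin Q → Fin d → ℝ)
    (τ : EuclideanSpace ℝ (Fin d)) : ℝ :=
  ∑ q, w q * Real.exp (-2 * Real.pi * ∑ i, γ q i * |τ i|) *
    Real.cos (2 * Real.pi * ⟪τ, η q⟫)

lemma posSemidef_map_ofReal {n 𝕜 : Type*} [Finite n] [RCLike 𝕜] {A : Matrix n n ℝ}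
    (hA : A.PosSemidef) : (A.map ((↑) : ℝ → 𝕜)).PosSemidef := by
  obtain ⟨m, v, rfl⟩ := Matrix.posSemidef_iff_eq_sum_vecMulVec.mp hA
  have hmap : (∑ k, Matrix.vecMulVec (v k) (star (v k))).map ((↑) : ℝ → 𝕜) =
      ∑ k, Matrix.vecMulVec (fun i => (v k i : 𝕜)) (star fun i => (v k i : 𝕜)) := by
    ext i j
    simp [Matrix.sum_apply, Matrix.vecMulVec_apply]
  rw [hmap]
  exact Matrix.posSemidef_sum _ fun k _ => Matrix.posSemidef_vecMulVec_self_star _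

/-- Positive definiteness of a function `f` on an additive group: every matrix `f (x i - x j)`
built from finitely many points is positive semidefinite (hence in particular Hermitian). -/
def IsPosDefFun {G 𝕜 : Type*} [AddGroup G] [RCLike 𝕜] (f : G → 𝕜) : Prop :=
  ∀ ⦃n : ℕ⦄ (x : Fin n → G), (Matrix.of fun i j => f (x i - x j)).PosSemidef

namespace IsPosDefFun

variable {G H 𝕜 ι : Type*} [AddGroup G] [AddGroup H] [RCLike 𝕜] {f g : G → 𝕜}

lemma sum_mul_conj_nonneg (hf : IsPosDefFun f) {n : ℕ} (x : Fin n → G) (c : Fin n → 𝕜) :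
    0 ≤ ∑ i, ∑ j, c i * starRingEnd 𝕜 (c j) * f (x i - x j) := by
  simpa [dotProduct, Matrix.mulVec, Finset.mul_sum, mul_assoc, mul_comm, mul_left_comm]
    using (hf x).dotProduct_mulVec_nonneg (star c)

lemma of_inner {E : Type*} [SeminormedAddCommGroup E] [InnerProductSpace 𝕜 E] (φ : G → E)
    (hφ : ∀ x y, f (x - y) = inner 𝕜 (φ x) (φ y)) : IsPosDefFun f := fun n x => by
  simpa only [hφ, Matrix.gram] using Matrix.posSemidef_gram 𝕜 fun i : Fin n => φ (x i)

lemma one : IsPosDefFun (fun _ : G => (1 : 𝕜)) :=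
  of_inner (fun _ => (1 : 𝕜)) fun _ _ => by simp

lemma const_mul {a : 𝕜} (ha : 0 ≤ a) (hf : IsPosDefFun f) : IsPosDefFun fun x => a * f x :=
  fun _ x => (hf x).smul ha

lemma mul (hf : IsPosDefFun f) (hg : IsPosDefFun g) : IsPosDefFun fun x => f x * g x :=
  fun _ x => (hf x).hadamard (hg x)

lemma sum {F : ι → G → 𝕜} (s : Finset ι) (hF : ∀ i ∈ s, IsPosDefFun (F i)) :
    IsPosDefFun fun x => ∑ i ∈ s, F i x := fun _ x => by
  convert Matrix.posSemidef_sum s fun i hi => hF i hi x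
  ext
  simp [Matrix.sum_apply]

lemma prod {F : ι → G → 𝕜} (s : Finset ι) (hF : ∀ i ∈ s, IsPosDefFun (F i)) :
    IsPosDefFun fun x => ∏ i ∈ s, F i x := by
  induction s using Finset.cons_induction with
  | empty => simpa only [Finset.prod_empty] using one
  | cons i s hi ih =>
    rw [Finset.forall_mem_cons] at hF
    simpa only [Finset.prod_cons] using hF.1.mul (ih hF.2)

lemma comp_addMonoidHom (hf : IsPosDefFun f) (φ : H →+ G) : IsPosDefFun fun x => f (φ x) :=
  fun _ x => by simpa only [map_sub] using hf fun i => φ (x i)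

lemma ofReal {f : G → ℝ} (hf : IsPosDefFun f) : IsPosDefFun fun x => (f x : 𝕜) :=
  fun _ x => posSemidef_map_ofReal (hf x)

end IsPosDefFun

lemma isPosDefFun_cos : IsPosDefFun Real.cos :=
  .of_inner (fun t : ℝ => Complex.exp (t * Complex.I)) fun s t => by
    simp only [Complex.inner, Complex.mul_re, Complex.conj_re, Complex.conj_im,
      Complex.exp_ofReal_mul_I_re, Complex.exp_ofReal_mul_I_im, Real.cos_sub]
    ring

lemma exp_neg_abs_sub (s t : ℝ) :
    Real.exp (-|s - t|) =
      Real.exp (-s) * Real.exp (-t) * min (Real.exp (2 * s)) (Real.exp (2 * t)) := by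
  have habs : -|s - t| = -s + -t + 2 * min s t := by
    linarith [max_sub_min_eq_abs' s t, max_add_min s t]
  rw [habs, Real.exp_add, Real.exp_add, mul_min_of_nonneg _ _ zero_le_two,
    Real.exp_monotone.map_min]

open MeasureTheory in
lemma isPosDefFun_exp_neg_abs : IsPosDefFun fun t : ℝ => Real.exp (-|t|) := by
  let indic (t : ℝ) : Lp ℝ 2 (volume : Measure ℝ) :=
    indicatorConstLp 2 (measurableSet_Ioc (a := 0) (b := Real.exp (2 * t)))
      measure_Ioc_lt_top.ne 1
  have inner_indic (s t : ℝ) : ⟪indic s, indic t⟫ = min (Real.exp (2 * s)) (Real.exp (2 * t)) := by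
    rw [L2.real_inner_indicatorConstLp_one_indicatorConstLp_one measurableSet_Ioc measurableSet_Ioc
      measure_Ioc_lt_top.ne measure_Ioc_lt_top.ne, Set.Ioc_inter_Ioc]
    simp [Real.exp_nonneg]
  refine .of_inner (fun t => Real.exp (-t) • indic t) fun s t => ?_
  rw [real_inner_smul_left, real_inner_smul_right, inner_indic, exp_neg_abs_sub, mul_assoc]

lemma isPosDefFun_exp_neg_sum_abs {G ι : Type*} [AddGroup G] (s : Finset ι) (φ : ι → G →+ ℝ) :
    IsPosDefFun fun x => Real.exp (-∑ i ∈ s, |φ i x|) := by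
  simp only [← Finset.sum_neg_distrib, Real.exp_sum]
  exact .prod s fun i _ => isPosDefFun_exp_neg_abs.comp_addMonoidHom (φ i)

/-- The Cauchy spectral mixture kernel, viewed as a complex-valued function of the
difference `τ`, is positive definite on `ℝ^d`: for all points `x_1, …, x_n` and all
complex coefficients `c_1, …, c_n`, the sum `∑_{i,j} c_i conj(c_j) k_c(x_i - x_j)`
is a nonnegative real number. -/
theorem csmKernel_posDef {d Q : ℕ} (w : Fin Q → ℝ) (hw : ∀ q, 0 ≤ w q)
    (η : Fin Q → EuclideanSpace ℝ (Fin d)) (γ : Fin Q → Fin d → ℝ)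
    (hγ : ∀ q i, 0 < γ q i)
    (n : ℕ) (x : Fin n → EuclideanSpace ℝ (Fin d)) (c : Fin n → ℂ) :
    0 ≤ ∑ i, ∑ j, c i * (starRingEnd ℂ) (c j) * (csmKernel w η γ (x i - x j) : ℂ) := by
  let decay (q : Fin Q) (i : Fin d) : EuclideanSpace ℝ (Fin d) →+ ℝ :=
    ((2 * Real.pi * γ q i) • EuclideanSpace.projₗ i : EuclideanSpace ℝ (Fin d) →ₗ[ℝ] ℝ)
  let phase (q : Fin Q) : EuclideanSpace ℝ (Fin d) →+ ℝ :=
    ((2 * Real.pi) • (innerₗ _).flip (η q) : EuclideanSpace ℝ (Fin d) →ₗ[ℝ] ℝ)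
  have hdecay (q τ) : -∑ i, |decay q i τ| = -2 * Real.pi * ∑ i, γ q i * |τ i| := by
    simp [decay, abs_mul, abs_of_pos, hγ, Real.pi_pos, Finset.mul_sum, mul_assoc]
  have hphase (q τ) : phase q τ = 2 * Real.pi * ⟪τ, η q⟫ := rfl
  have hk : IsPosDefFun (csmKernel w η γ) := by
    unfold csmKernel
    simp only [← hdecay, ← hphase]
    exact .sum _ fun q _ =>
      ((isPosDefFun_exp_neg_sum_abs _ (decay q)).const_mul (hw q)).mul
        (isPosDefFun_cos.comp_addMonoidHom (phase q))
  exact hk.ofReal.sum_mul_conj_nonneg x c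
end

section
/- Let S_gc = S_g + S_c, where S_g is the symmetrized Gaussian mixture spectral density with weights w_q^g ≥ 0 and S_c is the symmetrized product-Cauchy mixture spectral density with weights w_q^c ≥ 0. Then S_gc is nonnegative on ℝ^d, and for every τ ∈ ℝ^d, ∫_{ℝ^d} S_gc(s) e^{2πi⟨s,τ⟩} ds = Σ_{q=1}^{Q_g} w_q^g exp(−2π² τᵀ Σ_q τ) cos(2π τᵀ μ_q) + Σ_{q=1}^{Q_c} w_q^c exp(−2π Σ_{i=1}^d γ_{q,i} |τ_i|) cos(2π τᵀ η_q); moreover the resulting function k_gc of τ is positive definite on ℝ^d. -/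
open MeasureTheory Matrix
open scoped RealInnerProductSpace ComplexOrder BigOperators

/-- The Gaussian density `N(s; μ, Σ)` on `ℝ^d`. -/
noncomputable def gaussianDensity {d : ℕ} (μ : EuclideanSpace ℝ (Fin d))
    (M : Matrix (Fin d) (Fin d) ℝ) (s : EuclideanSpace ℝ (Fin d)) : ℝ :=
  (2 * Real.pi) ^ (-(d : ℝ) / 2) * M.det ^ (-(1 : ℝ) / 2) *
    Real.exp (-(dotProduct (fun i => s i - μ i) (M⁻¹.mulVec fun i => s i - μ i)) / 2)

/-- The product Cauchy density `C(s; η, γ) = ∏_i γ_i / (π (γ_i² + (s_i - η_i)²))`. -/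
noncomputable def cauchyProdDensity {d : ℕ} (η : EuclideanSpace ℝ (Fin d))
    (γ : Fin d → ℝ) (s : EuclideanSpace ℝ (Fin d)) : ℝ :=
  ∏ i, γ i / (Real.pi * ((γ i) ^ 2 + (s i - η i) ^ 2))

/-- The symmetrized Gaussian mixture spectral density `S_g(s) = (φ_g(s) + φ_g(-s))/2`. -/
noncomputable def symmGaussianMixture {d Qg : ℕ} (wg : Fin Qg → ℝ)
    (μ : Fin Qg → EuclideanSpace ℝ (Fin d)) (M : Fin Qg → Matrix (Fin d) (Fin d) ℝ)
    (s : EuclideanSpace ℝ (Fin d)) : ℝ :=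
  ((∑ q, wg q * gaussianDensity (μ q) (M q) s) +
    (∑ q, wg q * gaussianDensity (μ q) (M q) (-s))) / 2

/-- The symmetrized product-Cauchy mixture spectral density `S_c(s) = (φ_c(s) + φ_c(-s))/2`. -/
noncomputable def symmCauchyMixture {d Qc : ℕ} (wc : Fin Qc → ℝ)
    (η : Fin Qc → EuclideanSpace ℝ (Fin d)) (γ : Fin Qc → Fin d → ℝ)
    (s : EuclideanSpace ℝ (Fin d)) : ℝ :=
  ((∑ q, wc q * cauchyProdDensity (η q) (γ q) s) +
    (∑ q, wc q * cauchyProdDensity (η q) (γ q) (-s))) / 2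

/-- The Gaussian-Cauchy spectral mixture kernel `k_gc`. -/
noncomputable def gcsmKernel {d Qg Qc : ℕ} (wg : Fin Qg → ℝ)
    (μ : Fin Qg → EuclideanSpace ℝ (Fin d)) (M : Fin Qg → Matrix (Fin d) (Fin d) ℝ)
    (wc : Fin Qc → ℝ) (η : Fin Qc → EuclideanSpace ℝ (Fin d)) (γ : Fin Qc → Fin d → ℝ)
    (τ : EuclideanSpace ℝ (Fin d)) : ℝ :=
  (∑ q, wg q * Real.exp (-2 * Real.pi ^ 2 *
      dotProduct (fun i => τ i) ((M q).mulVec fun i => τ i)) *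
    Real.cos (2 * Real.pi * ⟪τ, μ q⟫)) +
  (∑ q, wc q * Real.exp (-2 * Real.pi * ∑ i, γ q i * |τ i|) *
    Real.cos (2 * Real.pi * ⟪τ, η q⟫))

/-!
Each component density is a translate of a centred one, which only contributes a phase to the
transform. A centred Gaussian with covariance `L * Lᵀ` is the image of the standard Gaussian under
`L`, and the transform of the centred product Cauchy density follows by Fourier inversion, one
coordinate at a time, from that of `exp (-2πγ|v|)`. Symmetrizing a real density replaces its
transform by the real part, which turns the phases into cosines. Finally, a nonnegative integrable
density defines a finite measure, and the characteristic function of a finite measure is positive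
definite because its Gram sums are integrals of `|∑ i, c i * exp (i⟨s, x i⟩)|²`.
-/

open scoped FourierTransform

section FourierInversionIntegral

variable {V : Type*} [NormedAddCommGroup V] [InnerProductSpace ℝ V] [MeasurableSpace V]
  [BorelSpace V] [FiniteDimensional ℝ V]
  {F : Type*} [NormedAddCommGroup F] [NormedSpace ℂ F]

lemma integral_mul_cexp_eq_fourierInv (f : V → ℂ) (τ : V) :
    ∫ s, f s * Complex.exp (2 * Real.pi * Complex.I * (⟪s, τ⟫ : ℂ)) = 𝓕⁻ f τ := by
  rw [Real.fourierInv_eq']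
  congr with s
  rw [smul_eq_mul, mul_comm]
  congr 2
  push_cast
  ring

lemma integrable_fourierChar_smul_iff {f : V → F} (τ : V) :
    Integrable (fun s ↦ Real.fourierChar ⟪s, τ⟫ • f s) ↔ Integrable f := by
  simpa using Real.fourierIntegral_convergent_iff (f := f) (μ := volume) (-τ)

lemma integrable_of_fourierInv_ne_zero {f : V → F} {τ : V} (h : 𝓕⁻ f τ ≠ 0) : Integrable f := by
  rw [Real.fourierInv_eq] at h
  exact (integrable_fourierChar_smul_iff τ).1 (.of_integral_ne_zero h)

lemma fourierInv_add_apply {f g : V → F} (hf : Integrable f) (hg : Integrable g) (τ : V) :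
    𝓕⁻ (fun s ↦ f s + g s) τ = 𝓕⁻ f τ + 𝓕⁻ g τ := by
  simp only [Real.fourierInv_eq, smul_add]
  exact integral_add ((integrable_fourierChar_smul_iff τ).2 hf)
    ((integrable_fourierChar_smul_iff τ).2 hg)

lemma fourierInv_const_mul (c : ℂ) (f : V → ℂ) (τ : V) :
    𝓕⁻ (fun s ↦ c * f s) τ = c * 𝓕⁻ f τ := by
  simp only [Real.fourierInv_eq', smul_eq_mul, mul_left_comm _ c, integral_const_mul]

lemma fourierInv_sum_const_mul {ι : Type*} [Fintype ι] (c : ι → ℂ) {f : ι → V → ℂ}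
    (hf : ∀ q, Integrable (f q)) (τ : V) :
    𝓕⁻ (fun s ↦ ∑ q, c q * f q s) τ = ∑ q, c q * 𝓕⁻ (f q) τ := by
  simp only [← fourierInv_const_mul]
  simp only [Real.fourierInv_eq, Finset.smul_sum]
  exact integral_finsetSum _ fun q _ ↦
    (integrable_fourierChar_smul_iff τ).2 ((hf q).const_mul (c q))

lemma fourierInv_comp_neg (f : V → F) (τ : V) : 𝓕⁻ (fun s ↦ f (-s)) τ = 𝓕⁻ f (-τ) :=
  Real.fourierInv_comp_linearIsometry (LinearIsometryEquiv.neg ℝ) f τ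

lemma fourierInv_comp_add_right (f : V → F) (m τ : V) :
    𝓕⁻ (fun s ↦ f (s + m)) τ = Real.fourierChar (-⟪m, τ⟫) • 𝓕⁻ f τ :=
  congrFun (VectorFourier.fourierIntegral_comp_add_right Real.fourierChar volume (-innerₗ V) f m) τ

lemma fourierInv_comp_linearMap {A : V →ₗ[ℝ] V} (hA : LinearMap.det A ≠ 0) (f : V → F) (τ : V) :
    𝓕⁻ (fun s ↦ f (A s)) (A.adjoint τ) = |LinearMap.det A|⁻¹ • 𝓕⁻ f τ := by
  simp only [Real.fourierInv_eq, LinearMap.adjoint_inner_right]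
  let e := (A.equivOfDetNeZero hA).toContinuousLinearEquiv.toHomeomorph.toMeasurableEquiv
  calc ∫ s, Real.fourierChar ⟪A s, τ⟫ • f (A s)
      = ∫ s, Real.fourierChar ⟪s, τ⟫ • f s ∂(volume.map A) :=
        (integral_map_equiv e fun s ↦ Real.fourierChar ⟪s, τ⟫ • f s).symm
    _ = |LinearMap.det A|⁻¹ • ∫ s, Real.fourierChar ⟪s, τ⟫ • f s := by
        rw [Measure.map_linearMap_addHaar_eq_smul_addHaar _ hA, integral_smul_measure,
          ENNReal.toReal_ofReal (abs_nonneg _), abs_inv]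

lemma fourierInv_prod {ι : Type*} [Fintype ι] (f : ι → ℝ → ℂ) (τ : EuclideanSpace ℝ ι) :
    𝓕⁻ (fun s : EuclideanSpace ℝ ι ↦ ∏ i, f i (s i)) τ = ∏ i, 𝓕⁻ (f i) (τ i) := by
  simp only [Real.fourierInv_eq', smul_eq_mul, ← integral_fintype_prod_volume_eq_prod]
  rw [← (PiLp.volume_preserving_toLp ι).integral_comp
    (MeasurableEquiv.toLp 2 _).measurableEmbedding]
  simp only [Finset.prod_mul_distrib, ← Complex.exp_sum, ← Finset.sum_mul, PiLp.inner_apply,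
    Finset.mul_sum, Complex.ofReal_sum]

lemma fourierInv_ofReal_neg (p : V → ℝ) (τ : V) :
    𝓕⁻ (fun s ↦ (p s : ℂ)) (-τ) = (starRingEnd ℂ) (𝓕⁻ (fun s ↦ (p s : ℂ)) τ) := by
  simp only [Real.fourierInv_eq', ← integral_conj, smul_eq_mul, map_mul, ← Complex.exp_conj,
    Complex.conj_ofReal, Complex.conj_I, inner_neg_right, mul_neg, neg_mul, Complex.ofReal_neg]

lemma fourierInv_ofReal_symmetrization {p : V → ℝ} (hp : Integrable p) (τ : V) :
    𝓕⁻ (fun s ↦ (((p s + p (-s)) / 2 : ℝ) : ℂ)) τ = ((𝓕⁻ (fun s ↦ (p s : ℂ)) τ).re : ℂ) := by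
  calc 𝓕⁻ (fun s ↦ (((p s + p (-s)) / 2 : ℝ) : ℂ)) τ
      = 𝓕⁻ (fun s ↦ 2⁻¹ * ((p s : ℂ) + (p (-s) : ℂ))) τ := by
        simp only [Complex.ofReal_div, Complex.ofReal_add, Complex.ofReal_ofNat,
          div_eq_inv_mul _ (2 : ℂ)]
    _ = 2⁻¹ * (𝓕⁻ (fun s ↦ (p s : ℂ)) τ + 𝓕⁻ (fun s ↦ (p s : ℂ)) (-τ)) := by
        rw [fourierInv_const_mul, fourierInv_add_apply hp.ofReal hp.comp_neg.ofReal,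
          fourierInv_comp_neg fun s ↦ (p s : ℂ)]
    _ = ((𝓕⁻ (fun s ↦ (p s : ℂ)) τ).re : ℂ) := by
        rw [fourierInv_ofReal_neg, Complex.re_eq_add_conj, div_eq_inv_mul]

end FourierInversionIntegral

section PositiveDefinite

variable {V : Type*} [NormedAddCommGroup V] [InnerProductSpace ℝ V] [MeasurableSpace V]
  [BorelSpace V]

/-- Positive definiteness of a function `k` on an additive group: the kernel `k (x - y)` induces
positive semidefinite Gram matrices. The order is that of `ComplexOrder`, so the inequality also
says that the sum is real. -/
def IsPositiveDefiniteFun {G : Type*} [Sub G] (k : G → ℂ) : Prop :=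
  ∀ (n : ℕ) (x : Fin n → G) (c : Fin n → ℂ),
    0 ≤ ∑ i, ∑ j, c i * (starRingEnd ℂ) (c j) * k (x i - x j)

lemma isPositiveDefiniteFun_charFun [SecondCountableTopology V] (ν : Measure V)
    [IsFiniteMeasure ν] : IsPositiveDefiniteFun (charFun ν) := by
  intro n x c
  let e (s t : V) : ℂ := Complex.exp (⟪s, t⟫ * Complex.I)
  have e_sub (s t u : V) : e s (t - u) = e s t * (starRingEnd ℂ) (e s u) := by
    simp only [e, ← Complex.exp_conj, ← Complex.exp_add, inner_sub_right, map_mul,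
      Complex.conj_ofReal, Complex.conj_I, Complex.ofReal_sub]
    ring_nf
  have integrable_e (t : V) : Integrable (fun s ↦ e s t) ν :=
    .of_bound (by fun_prop) 1 (.of_forall fun s ↦ (Complex.norm_exp_ofReal_mul_I _).le)
  calc (0 : ℂ)
      ≤ ∫ s, ((Complex.normSq (∑ i, c i * e s (x i)) : ℝ) : ℂ) ∂ν := by
        rw [integral_complex_ofReal]
        exact Complex.zero_le_real.2 (integral_nonneg fun s ↦ Complex.normSq_nonneg _)
    _ = ∫ s, ∑ i, ∑ j, c i * (starRingEnd ℂ) (c j) * e s (x i - x j) ∂ν := by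
        congr with s
        simp only [← Complex.mul_conj, map_sum, map_mul, Finset.sum_mul_sum, e_sub]
        congr! 2
        ring
    _ = ∑ i, ∑ j, c i * (starRingEnd ℂ) (c j) * charFun ν (x i - x j) := by
        have integrable_term (i j : Fin n) :
            Integrable (fun s ↦ c i * (starRingEnd ℂ) (c j) * e s (x i - x j)) ν :=
          (integrable_e _).const_mul _
        rw [integral_finsetSum _ fun i _ ↦ integrable_finsetSum _ fun j _ ↦ integrable_term i j]
        simp only [integral_finsetSum _ fun j _ ↦ integrable_term _ j, integral_const_mul,
          charFun_apply, e]

variable [FiniteDimensional ℝ V]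

lemma fourierInv_ofReal_eq_charFun {p : V → ℝ} (hp : Integrable p) (hp₀ : ∀ s, 0 ≤ p s) (τ : V) :
    𝓕⁻ (fun s ↦ (p s : ℂ)) τ =
      charFun (volume.withDensity fun s ↦ ENNReal.ofReal (p s)) ((2 * Real.pi) • τ) := by
  rw [Real.fourierInv_eq', charFun_apply, integral_withDensity_eq_integral_toReal_smul₀
    hp.aemeasurable.ennreal_ofReal (.of_forall fun _ ↦ ENNReal.ofReal_lt_top)]
  simp only [ENNReal.toReal_ofReal (hp₀ _), inner_smul_right, smul_eq_mul, Complex.real_smul,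
    mul_comm]

lemma isPositiveDefiniteFun_fourierInv_ofReal {p : V → ℝ} (hp : Integrable p)
    (hp₀ : ∀ s, 0 ≤ p s) : IsPositiveDefiniteFun (𝓕⁻ fun s ↦ (p s : ℂ)) := by
  have := isFiniteMeasure_withDensity_ofReal hp.hasFiniteIntegral
  intro n x c
  simpa only [fourierInv_ofReal_eq_charFun hp hp₀, smul_sub] using
    isPositiveDefiniteFun_charFun (volume.withDensity fun s ↦ ENNReal.ofReal (p s)) n
      (fun i ↦ (2 * Real.pi) • x i) c

end PositiveDefinite

section SymmetrizedMixture

lemma integrable_sum_const_mul {X ι : Type*} [Fintype ι] [MeasurableSpace X] {ν : Measure X}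
    (w : ι → ℝ) {p : ι → X → ℝ} (hp : ∀ q, Integrable (p q) ν) :
    Integrable (fun s ↦ ∑ q, w q * p q s) ν :=
  integrable_finsetSum _ fun q _ ↦ (hp q).const_mul (w q)

variable {V ι : Type*} [Fintype ι]

/-- The symmetrization `(φ(s) + φ(-s)) / 2` of the mixture `φ = ∑ q, w q * p q`; it is the common
form of `symmGaussianMixture` and `symmCauchyMixture`. -/
noncomputable def symmMixture [Neg V] (w : ι → ℝ) (p : ι → V → ℝ) (s : V) : ℝ :=
  ((∑ q, w q * p q s) + ∑ q, w q * p q (-s)) / 2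

lemma symmMixture_nonneg [Neg V] {w : ι → ℝ} (hw : ∀ q, 0 ≤ w q) {p : ι → V → ℝ}
    (hp : ∀ q s, 0 ≤ p q s) (s : V) : 0 ≤ symmMixture w p s := by
  have mixture_nonneg (t : V) : 0 ≤ ∑ q, w q * p q t :=
    Finset.sum_nonneg fun q _ ↦ mul_nonneg (hw q) (hp q t)
  exact div_nonneg (add_nonneg (mixture_nonneg s) (mixture_nonneg (-s))) zero_le_two

variable [NormedAddCommGroup V] [InnerProductSpace ℝ V] [MeasurableSpace V] [BorelSpace V]
  [FiniteDimensional ℝ V] (w : ι → ℝ) {p : ι → V → ℝ}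

lemma integrable_symmMixture (hp : ∀ q, Integrable (p q)) : Integrable (symmMixture w p) := by
  have := integrable_sum_const_mul w hp
  exact (this.add this.comp_neg).div_const 2

lemma fourierInv_symmMixture (hp : ∀ q, Integrable (p q)) (τ : V) :
    𝓕⁻ (fun s ↦ (symmMixture w p s : ℂ)) τ =
      ((∑ q, w q * (𝓕⁻ (fun s ↦ (p q s : ℂ)) τ).re : ℝ) : ℂ) := by
  have fourierInv_mixture : 𝓕⁻ (fun s ↦ ((∑ q, w q * p q s : ℝ) : ℂ)) τ =
      ∑ q, w q * 𝓕⁻ (fun s ↦ (p q s : ℂ)) τ := by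
    simp only [Complex.ofReal_sum, Complex.ofReal_mul]
    exact fourierInv_sum_const_mul _ (fun q ↦ (hp q).ofReal) τ
  simp only [symmMixture]
  rw [fourierInv_ofReal_symmetrization (integrable_sum_const_mul w hp), fourierInv_mixture]
  simp only [Complex.re_sum, Complex.re_ofReal_mul]

end SymmetrizedMixture

section Cauchy

open ProbabilityTheory
open scoped NNReal

lemma integral_cexp_mul_sub_mul_abs {a b : ℂ} (h : |b.re| < a.re) :
    ∫ x : ℝ, Complex.exp (b * x - a * |x|) = 2 * a / (a ^ 2 - b ^ 2) := by
  obtain ⟨neg_lt, lt⟩ := abs_lt.1 h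
  have re_add_pos : 0 < (b + a).re := by rw [Complex.add_re]; linarith
  have re_sub_neg : (b - a).re < 0 := by rw [Complex.sub_re]; linarith
  have on_Iic : Set.EqOn (fun x : ℝ ↦ Complex.exp (b * x - a * |x|))
      (fun x : ℝ ↦ Complex.exp ((b + a) * x)) (Set.Iic 0) := by
    intro x hx
    simp only [abs_of_nonpos (Set.mem_Iic.1 hx), Complex.ofReal_neg]
    ring_nf
  have on_Ioi : Set.EqOn (fun x : ℝ ↦ Complex.exp (b * x - a * |x|))
      (fun x : ℝ ↦ Complex.exp ((b - a) * x)) (Set.Ioi 0) := by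
    intro x hx
    simp only [abs_of_pos (Set.mem_Ioi.1 hx)]
    ring_nf
  have add_ne_zero : b + a ≠ 0 := fun h₀ ↦ re_add_pos.ne' (by rw [h₀, Complex.zero_re])
  have sub_ne_zero : b - a ≠ 0 := fun h₀ ↦ re_sub_neg.ne (by rw [h₀, Complex.zero_re])
  calc ∫ x : ℝ, Complex.exp (b * x - a * |x|)
      = (∫ x : ℝ in Set.Iic 0, Complex.exp (b * x - a * |x|)) +
          ∫ x : ℝ in Set.Ioi 0, Complex.exp (b * x - a * |x|) :=
        (intervalIntegral.integral_Iic_add_Ioi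
          ((integrableOn_exp_mul_complex_Iic re_add_pos 0).congr_fun on_Iic.symm measurableSet_Iic)
          ((integrableOn_exp_mul_complex_Ioi re_sub_neg 0).congr_fun on_Ioi.symm
            measurableSet_Ioi)).symm
    _ = 1 / (b + a) - 1 / (b - a) := by
        rw [setIntegral_congr_fun measurableSet_Iic on_Iic,
          setIntegral_congr_fun measurableSet_Ioi on_Ioi,
          integral_exp_mul_complex_Iic re_add_pos, integral_exp_mul_complex_Ioi re_sub_neg]
        simp only [Complex.ofReal_zero, mul_zero, Complex.exp_zero, neg_div, sub_eq_add_neg]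
    _ = 2 * a / (a ^ 2 - b ^ 2) := by
        rw [show a ^ 2 - b ^ 2 = -((b + a) * (b - a)) by ring]
        field_simp
        ring

lemma fourier_exp_neg_two_pi_mul_abs {γ : ℝ≥0} (hγ : γ ≠ 0) :
    𝓕 (fun v : ℝ ↦ ((Real.exp (-2 * Real.pi * (γ * |v|)) : ℝ) : ℂ)) =
      fun x ↦ (cauchyPDFReal 0 γ x : ℂ) := by
  ext x
  let a : ℂ := 2 * Real.pi * γ
  let b : ℂ := -(2 * Real.pi * Complex.I * x)
  have abs_re_lt : |b.re| < a.re := by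
    have : 0 < (γ : ℝ) := by positivity
    simp [a, b, Real.pi_pos, this]
  calc 𝓕 (fun v : ℝ ↦ ((Real.exp (-2 * Real.pi * (γ * |v|)) : ℝ) : ℂ)) x
      = ∫ v : ℝ, Complex.exp (b * v - a * |v|) := by
        rw [Real.fourier_real_eq_integral_exp_smul]
        congr with v
        rw [smul_eq_mul, Complex.ofReal_exp, ← Complex.exp_add]
        congr 1
        push_cast
        ring
    _ = 2 * a / (a ^ 2 - b ^ 2) := integral_cexp_mul_sub_mul_abs abs_re_lt
    _ = cauchyPDFReal 0 γ x := by
        have hx : (x ^ 2 + γ ^ 2 : ℂ) ≠ 0 := by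
          exact_mod_cast (by positivity : (0 : ℝ) < x ^ 2 + γ ^ 2).ne'
        have hπ : (Real.pi : ℂ) ≠ 0 := Complex.ofReal_ne_zero.2 Real.pi_ne_zero
        have hden : a ^ 2 - b ^ 2 = 4 * Real.pi ^ 2 * (x ^ 2 + γ ^ 2) := by
          linear_combination (-4 * Real.pi ^ 2 * x ^ 2 : ℂ) * Complex.I_sq
        rw [hden, cauchyPDFReal_def]
        push_cast
        rw [sub_zero]
        field_simp
        simp only [a]
        ring

lemma fourierInv_cauchyPDFReal_zero {γ : ℝ≥0} (hγ : γ ≠ 0) :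
    𝓕⁻ (fun x ↦ (cauchyPDFReal 0 γ x : ℂ)) =
      fun t ↦ ((Real.exp (-2 * Real.pi * (γ * |t|)) : ℝ) : ℂ) := by
  have fourier_eq := fourier_exp_neg_two_pi_mul_abs hγ
  have fourier_ne_zero :
      𝓕 (fun v : ℝ ↦ ((Real.exp (-2 * Real.pi * (γ * |v|)) : ℝ) : ℂ)) 0 ≠ 0 := by
    rw [fourier_eq]
    exact Complex.ofReal_ne_zero.2 (cauchyPDF_pos 0 hγ 0).ne'
  rw [← fourier_eq]
  refine Continuous.fourierInv_fourier_eq (by fun_prop) ?_ ?_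
  · refine integrable_of_fourierInv_ne_zero (τ := 0) ?_
    rwa [Real.fourierInv_eq_fourier_neg, neg_zero]
  · rw [fourier_eq]
    exact (integrable_cauchyPDFReal 0).ofReal

lemma fourierInv_cauchyPDFReal (x₀ : ℝ) {γ : ℝ≥0} (hγ : γ ≠ 0) (t : ℝ) :
    𝓕⁻ (fun x ↦ (cauchyPDFReal x₀ γ x : ℂ)) t =
      (Real.exp (-2 * Real.pi * (γ * |t|)) : ℂ) *
        Complex.exp ((2 * Real.pi * ⟪t, x₀⟫ : ℝ) * Complex.I) := by
  have translate : (fun x ↦ (cauchyPDFReal x₀ γ x : ℂ)) =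
      fun x ↦ (cauchyPDFReal 0 γ (x + -x₀) : ℂ) := by
    simp only [cauchyPDFReal_def, ← sub_eq_add_neg, sub_zero]
  rw [translate, fourierInv_comp_add_right fun x ↦ (cauchyPDFReal 0 γ x : ℂ),
    fourierInv_cauchyPDFReal_zero hγ, inner_neg_left, neg_neg, Circle.smul_def,
    Real.fourierChar_apply, smul_eq_mul, mul_comm,
    real_inner_comm]

variable {d : ℕ} (η : EuclideanSpace ℝ (Fin d)) {γ : Fin d → ℝ}

lemma cauchyProdDensity_eq_prod_cauchyPDFReal (γ : Fin d → ℝ≥0) (s : EuclideanSpace ℝ (Fin d)) :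
    cauchyProdDensity η (fun i ↦ γ i) s = ∏ i, cauchyPDFReal (η i) (γ i) (s i) := by
  refine Finset.prod_congr rfl fun i _ ↦ ?_
  rw [cauchyPDFReal_def]
  field_simp
  ring_nf

lemma cauchyProdDensity_nonneg (hγ : ∀ i, 0 ≤ γ i) (s : EuclideanSpace ℝ (Fin d)) :
    0 ≤ cauchyProdDensity η γ s :=
  Finset.prod_nonneg fun i _ ↦ div_nonneg (hγ i) (by positivity)

lemma fourierInv_cauchyProdDensity (hγ : ∀ i, 0 < γ i) (τ : EuclideanSpace ℝ (Fin d)) :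
    𝓕⁻ (fun s ↦ (cauchyProdDensity η γ s : ℂ)) τ =
      (Real.exp (-2 * Real.pi * ∑ i, γ i * |τ i|) : ℂ) *
        Complex.exp ((2 * Real.pi * ⟪τ, η⟫ : ℝ) * Complex.I) := by
  lift γ to Fin d → ℝ≥0 using fun i ↦ (hγ i).le
  have hγ₀ (i : Fin d) : γ i ≠ 0 := (NNReal.coe_pos.1 (hγ i)).ne'
  simp only [cauchyProdDensity_eq_prod_cauchyPDFReal, Complex.ofReal_prod]
  rw [fourierInv_prod fun i x ↦ (cauchyPDFReal (η i) (γ i) x : ℂ)]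
  simp only [fourierInv_cauchyPDFReal _ (hγ₀ _), Finset.prod_mul_distrib]
  simp only [Complex.ofReal_exp, ← Complex.exp_sum, PiLp.inner_apply, Finset.mul_sum,
    Complex.ofReal_sum, Finset.sum_mul]

lemma integrable_cauchyProdDensity (hγ : ∀ i, 0 < γ i) : Integrable (cauchyProdDensity η γ) := by
  have fourierInv_ne_zero : 𝓕⁻ (fun s ↦ (cauchyProdDensity η γ s : ℂ)) 0 ≠ 0 := by
    rw [fourierInv_cauchyProdDensity η hγ]
    exact mul_ne_zero (Complex.ofReal_ne_zero.2 (Real.exp_ne_zero _)) (Complex.exp_ne_zero _)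
  exact (integrable_of_fourierInv_ne_zero fourierInv_ne_zero).re

end Cauchy

section Gaussian

section StandardGaussian

variable {V : Type*} [NormedAddCommGroup V] [InnerProductSpace ℝ V]

/-- The density of the standard Gaussian measure, i.e. mean `0` and covariance `1`, on a Euclidean
space `V`. -/
noncomputable def stdGaussianDensity (v : V) : ℝ :=
  (2 * Real.pi) ^ (-(Module.finrank ℝ V : ℝ) / 2) * Real.exp (-‖v‖ ^ 2 / 2)

lemma fourierInv_stdGaussianDensity [MeasurableSpace V] [BorelSpace V] [FiniteDimensional ℝ V]
    (τ : V) :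
    𝓕⁻ (fun v : V ↦ (stdGaussianDensity v : ℂ)) τ = Real.exp (-2 * Real.pi ^ 2 * ‖τ‖ ^ 2) := by
  have half_re_pos : 0 < (1 / 2 : ℂ).re := by norm_num
  have two_pi_pos : 0 < 2 * Real.pi := by positivity
  have pi_div_half_cpow : (Real.pi / (1 / 2) : ℂ) ^ (Module.finrank ℝ V / 2 : ℂ) =
      ((2 * Real.pi) ^ ((Module.finrank ℝ V : ℝ) / 2) : ℝ) := by
    rw [Complex.ofReal_cpow two_pi_pos.le]
    push_cast
    ring_nf
  calc 𝓕⁻ (fun v : V ↦ (stdGaussianDensity v : ℂ)) τ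
      = ((2 * Real.pi) ^ (-(Module.finrank ℝ V : ℝ) / 2) : ℝ) *
          𝓕 (fun v : V ↦ Complex.exp (-(1 / 2 : ℂ) * ‖v‖ ^ 2)) (-τ) := by
        simp only [stdGaussianDensity, Complex.ofReal_mul]
        rw [fourierInv_const_mul, Real.fourierInv_eq_fourier_neg]
        congr! 3 with v
        push_cast
        ring_nf
    _ = ((2 * Real.pi) ^ (-(Module.finrank ℝ V : ℝ) / 2) *
          (2 * Real.pi) ^ ((Module.finrank ℝ V : ℝ) / 2) : ℝ) *
            Real.exp (-2 * Real.pi ^ 2 * ‖τ‖ ^ 2) := by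
        rw [fourier_gaussian_innerProductSpace half_re_pos, norm_neg, Complex.ofReal_mul, mul_assoc,
          pi_div_half_cpow]
        push_cast
        ring_nf
    _ = Real.exp (-2 * Real.pi ^ 2 * ‖τ‖ ^ 2) := by
        rw [← Real.rpow_add two_pi_pos, neg_div, neg_add_cancel, Real.rpow_zero,
          Complex.ofReal_one, one_mul]

end StandardGaussian

open scoped MatrixOrder in
lemma exists_eq_mul_transpose_of_posDef {n : Type*} [Fintype n] [DecidableEq n]
    {M : Matrix n n ℝ} (hM : M.PosDef) : ∃ L : Matrix n n ℝ, L.det ≠ 0 ∧ M = L * Lᵀ := by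
  obtain ⟨B, hB, rfl⟩ :=
    CStarAlgebra.isStrictlyPositive_iff_eq_star_mul_self.1 hM.isStrictlyPositive
  refine ⟨Bᵀ, ?_, by rw [transpose_transpose, star_eq_conjTranspose,
    conjTranspose_eq_transpose_of_trivial]⟩
  rw [det_transpose]
  exact ((isUnit_iff_isUnit_det B).1 hB).ne_zero

lemma dotProduct_mul_transpose_mulVec {m n R : Type*} [Fintype m] [Fintype n] [CommSemiring R]
    (L : Matrix m n R) (v : m → R) : v ⬝ᵥ ((L * Lᵀ) *ᵥ v) = (Lᵀ *ᵥ v) ⬝ᵥ (Lᵀ *ᵥ v) := by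
  rw [← mulVec_mulVec, dotProduct_mulVec, mulVec_transpose]

lemma dotProduct_inv_mul_transpose_mulVec {n R : Type*} [Fintype n] [DecidableEq n] [CommRing R]
    {L : Matrix n n R} (hL : IsUnit L.det) (v : n → R) :
    (L *ᵥ v) ⬝ᵥ ((L * Lᵀ)⁻¹ *ᵥ (L *ᵥ v)) = v ⬝ᵥ v := by
  rw [Matrix.mul_inv_rev, ← transpose_nonsing_inv, mulVec_mulVec, mul_assoc,
    nonsing_inv_mul _ hL, mul_one, dotProduct_mulVec, vecMul_transpose, mulVec_mulVec,
    nonsing_inv_mul _ hL, one_mulVec]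

lemma dotProduct_self_eq_norm_sq {n : Type*} [Fintype n] (v : EuclideanSpace ℝ n) :
    v ⬝ᵥ v = ‖v‖ ^ 2 := by
  rw [EuclideanSpace.real_norm_sq_eq]
  simp only [dotProduct, sq]

variable {d : ℕ} (μ : EuclideanSpace ℝ (Fin d))

lemma gaussianDensity_nonneg {M : Matrix (Fin d) (Fin d) ℝ} (hM : 0 ≤ M.det)
    (s : EuclideanSpace ℝ (Fin d)) : 0 ≤ gaussianDensity μ M s :=
  mul_nonneg (mul_nonneg (by positivity) (Real.rpow_nonneg hM _)) (Real.exp_nonneg _)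

lemma gaussianDensity_eq_zero_add_neg (M : Matrix (Fin d) (Fin d) ℝ)
    (s : EuclideanSpace ℝ (Fin d)) : gaussianDensity μ M s = gaussianDensity 0 M (s + -μ) := by
  simp only [gaussianDensity, ← sub_eq_add_neg, PiLp.sub_apply, PiLp.zero_apply, sub_zero]

lemma gaussianDensity_zero_mul_transpose {L : Matrix (Fin d) (Fin d) ℝ} (hL : L.det ≠ 0)
    (v : EuclideanSpace ℝ (Fin d)) :
    gaussianDensity 0 (L * Lᵀ) (toEuclideanLin L v) = |L.det|⁻¹ * stdGaussianDensity v := by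
  have det_rpow : (L * Lᵀ).det ^ (-(1 : ℝ) / 2) = |L.det|⁻¹ := by
    rw [det_mul, det_transpose, neg_div, Real.rpow_neg (mul_self_nonneg _), ← Real.sqrt_eq_rpow,
      Real.sqrt_mul_self_eq_abs]
  have coord (i : Fin d) : toEuclideanLin L v i - (0 : EuclideanSpace ℝ (Fin d)) i = (L *ᵥ v) i :=
    sub_zero _
  simp only [gaussianDensity, stdGaussianDensity, coord, finrank_euclideanSpace_fin]
  rw [det_rpow, dotProduct_inv_mul_transpose_mulVec hL.isUnit, dotProduct_self_eq_norm_sq]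
  ring

lemma fourierInv_gaussianDensity_zero {M : Matrix (Fin d) (Fin d) ℝ} (hM : M.PosDef)
    (τ : EuclideanSpace ℝ (Fin d)) :
    𝓕⁻ (fun s ↦ (gaussianDensity 0 M s : ℂ)) τ =
      Real.exp (-2 * Real.pi ^ 2 * (τ ⬝ᵥ (M *ᵥ τ))) := by
  obtain ⟨L, det_ne_zero, rfl⟩ := exists_eq_mul_transpose_of_posDef hM
  have det_eq : LinearMap.det (toEuclideanLin L) = L.det := LinearMap.det_toLpLin 2 L
  have norm_adjoint : ‖(toEuclideanLin L).adjoint τ‖ ^ 2 = τ ⬝ᵥ ((L * Lᵀ) *ᵥ τ) := by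
    rw [← toEuclideanLin_conjTranspose_eq_adjoint, conjTranspose_eq_transpose_of_trivial,
      ← dotProduct_self_eq_norm_sq, dotProduct_mul_transpose_mulVec]
    rfl
  refine mul_left_cancel₀ (a := ((|L.det|⁻¹ : ℝ) : ℂ)) (by simpa) ?_
  calc ((|L.det|⁻¹ : ℝ) : ℂ) * 𝓕⁻ (fun s ↦ (gaussianDensity 0 (L * Lᵀ) s : ℂ)) τ
      = 𝓕⁻ (fun v ↦ (gaussianDensity 0 (L * Lᵀ) (toEuclideanLin L v) : ℂ))
          ((toEuclideanLin L).adjoint τ) := by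
        rw [fourierInv_comp_linearMap (det_eq ▸ det_ne_zero)
          fun s ↦ (gaussianDensity 0 (L * Lᵀ) s : ℂ), det_eq, Complex.real_smul]
    _ = ((|L.det|⁻¹ : ℝ) : ℂ) * Real.exp (-2 * Real.pi ^ 2 * (τ ⬝ᵥ ((L * Lᵀ) *ᵥ τ))) := by
        simp only [gaussianDensity_zero_mul_transpose det_ne_zero, Complex.ofReal_mul]
        rw [fourierInv_const_mul, fourierInv_stdGaussianDensity, norm_adjoint]

lemma fourierInv_gaussianDensity {M : Matrix (Fin d) (Fin d) ℝ} (hM : M.PosDef)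
    (τ : EuclideanSpace ℝ (Fin d)) :
    𝓕⁻ (fun s ↦ (gaussianDensity μ M s : ℂ)) τ =
      (Real.exp (-2 * Real.pi ^ 2 * (τ ⬝ᵥ (M *ᵥ τ))) : ℂ) *
        Complex.exp ((2 * Real.pi * ⟪τ, μ⟫ : ℝ) * Complex.I) := by
  simp only [gaussianDensity_eq_zero_add_neg μ]
  rw [fourierInv_comp_add_right fun s ↦ (gaussianDensity 0 M s : ℂ),
    fourierInv_gaussianDensity_zero hM, inner_neg_left, neg_neg, Circle.smul_def,
    Real.fourierChar_apply, smul_eq_mul, mul_comm, real_inner_comm]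

lemma integrable_gaussianDensity {M : Matrix (Fin d) (Fin d) ℝ} (hM : M.PosDef) :
    Integrable (gaussianDensity μ M) := by
  have fourierInv_ne_zero : 𝓕⁻ (fun s ↦ (gaussianDensity μ M s : ℂ)) 0 ≠ 0 := by
    rw [fourierInv_gaussianDensity μ hM]
    exact mul_ne_zero (Complex.ofReal_ne_zero.2 (Real.exp_ne_zero _)) (Complex.exp_ne_zero _)
  exact (integrable_of_fourierInv_ne_zero fourierInv_ne_zero).re

end Gaussian

section SpectralMixtureKernel

variable {d Qg Qc : ℕ}

lemma re_ofReal_mul_cexp_mul_I (r θ : ℝ) :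
    ((r : ℂ) * Complex.exp (θ * Complex.I)).re = r * Real.cos θ := by
  rw [Complex.re_ofReal_mul, Complex.exp_ofReal_mul_I_re]

variable (wg : Fin Qg → ℝ) (μ : Fin Qg → EuclideanSpace ℝ (Fin d))
  {M : Fin Qg → Matrix (Fin d) (Fin d) ℝ} (wc : Fin Qc → ℝ) (η : Fin Qc → EuclideanSpace ℝ (Fin d))
  {γ : Fin Qc → Fin d → ℝ}

lemma symmGaussianMixture_eq_symmMixture (M : Fin Qg → Matrix (Fin d) (Fin d) ℝ) :
    symmGaussianMixture wg μ M = symmMixture wg fun q ↦ gaussianDensity (μ q) (M q) := rfl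

lemma symmCauchyMixture_eq_symmMixture (γ : Fin Qc → Fin d → ℝ) :
    symmCauchyMixture wc η γ = symmMixture wc fun q ↦ cauchyProdDensity (η q) (γ q) := rfl

lemma integrable_symmGaussianMixture (hM : ∀ q, (M q).PosDef) :
    Integrable (symmGaussianMixture wg μ M) :=
  integrable_symmMixture wg fun q ↦ integrable_gaussianDensity (μ q) (hM q)

lemma integrable_symmCauchyMixture (hγ : ∀ q i, 0 < γ q i) :
    Integrable (symmCauchyMixture wc η γ) :=
  integrable_symmMixture wc fun q ↦ integrable_cauchyProdDensity (η q) (hγ q)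

lemma fourierInv_symmGaussianMixture (hM : ∀ q, (M q).PosDef) (τ : EuclideanSpace ℝ (Fin d)) :
    𝓕⁻ (fun s ↦ (symmGaussianMixture wg μ M s : ℂ)) τ =
      ((∑ q, wg q * Real.exp (-2 * Real.pi ^ 2 * (τ ⬝ᵥ (M q *ᵥ τ))) *
        Real.cos (2 * Real.pi * ⟪τ, μ q⟫) : ℝ) : ℂ) := by
  rw [symmGaussianMixture_eq_symmMixture,
    fourierInv_symmMixture wg fun q ↦ integrable_gaussianDensity (μ q) (hM q)]
  simp only [fourierInv_gaussianDensity _ (hM _), re_ofReal_mul_cexp_mul_I, mul_assoc]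

lemma fourierInv_symmCauchyMixture (hγ : ∀ q i, 0 < γ q i) (τ : EuclideanSpace ℝ (Fin d)) :
    𝓕⁻ (fun s ↦ (symmCauchyMixture wc η γ s : ℂ)) τ =
      ((∑ q, wc q * Real.exp (-2 * Real.pi * ∑ i, γ q i * |τ i|) *
        Real.cos (2 * Real.pi * ⟪τ, η q⟫) : ℝ) : ℂ) := by
  rw [symmCauchyMixture_eq_symmMixture,
    fourierInv_symmMixture wc fun q ↦ integrable_cauchyProdDensity (η q) (hγ q)]
  simp only [fourierInv_cauchyProdDensity _ (hγ _), re_ofReal_mul_cexp_mul_I, mul_assoc]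

lemma fourierInv_symmGaussianMixture_add_symmCauchyMixture (hM : ∀ q, (M q).PosDef)
    (hγ : ∀ q i, 0 < γ q i) :
    𝓕⁻ (fun s ↦ ((symmGaussianMixture wg μ M s + symmCauchyMixture wc η γ s : ℝ) : ℂ)) =
      fun τ ↦ (gcsmKernel wg μ M wc η γ τ : ℂ) := by
  ext τ
  simp only [Complex.ofReal_add]
  rw [fourierInv_add_apply (integrable_symmGaussianMixture wg μ hM).ofReal
    (integrable_symmCauchyMixture wc η hγ).ofReal, fourierInv_symmGaussianMixture wg μ hM,
    fourierInv_symmCauchyMixture wc η hγ, ← Complex.ofReal_add]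
  rfl

end SpectralMixtureKernel

/-- Let `S_gc = S_g + S_c` be the sum of the symmetrized Gaussian and product-Cauchy
mixture spectral densities. Then `S_gc` is nonnegative on `ℝ^d`, its inverse Fourier
transform equals the Gaussian-Cauchy spectral mixture kernel `k_gc`, and `k_gc`
(viewed as a complex-valued function of the difference) is positive definite. -/
theorem gcsm_nonneg_fourier_posDef {d Qg Qc : ℕ}
    (wg : Fin Qg → ℝ) (hwg : ∀ q, 0 ≤ wg q)
    (μ : Fin Qg → EuclideanSpace ℝ (Fin d)) (M : Fin Qg → Matrix (Fin d) (Fin d) ℝ)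
    (hsymm : ∀ q, (M q).IsSymm) (hpd : ∀ q, (M q).PosDef)
    (wc : Fin Qc → ℝ) (hwc : ∀ q, 0 ≤ wc q)
    (η : Fin Qc → EuclideanSpace ℝ (Fin d)) (γ : Fin Qc → Fin d → ℝ)
    (hγ : ∀ q i, 0 < γ q i) :
    (∀ s : EuclideanSpace ℝ (Fin d),
        0 ≤ symmGaussianMixture wg μ M s + symmCauchyMixture wc η γ s) ∧
    (∀ τ : EuclideanSpace ℝ (Fin d),
        ∫ s, ((symmGaussianMixture wg μ M s + symmCauchyMixture wc η γ s : ℝ) : ℂ) *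
            Complex.exp (2 * Real.pi * Complex.I * (⟪s, τ⟫ : ℂ)) =
          ((gcsmKernel wg μ M wc η γ τ : ℝ) : ℂ)) ∧
    (∀ (n : ℕ) (x : Fin n → EuclideanSpace ℝ (Fin d)) (c : Fin n → ℂ),
        0 ≤ ∑ i, ∑ j, c i * (starRingEnd ℂ) (c j) *
          ((gcsmKernel wg μ M wc η γ (x i - x j) : ℝ) : ℂ)) := by
  have nonneg (s) : 0 ≤ symmGaussianMixture wg μ M s + symmCauchyMixture wc η γ s :=
    add_nonneg
      (symmMixture_nonneg hwg (fun q ↦ gaussianDensity_nonneg (μ q) (hpd q).det_pos.le) s)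
      (symmMixture_nonneg hwc (fun q ↦ cauchyProdDensity_nonneg (η q) fun i ↦ (hγ q i).le) s)
  have integrable := (integrable_symmGaussianMixture wg μ hpd).add
    (integrable_symmCauchyMixture wc η hγ)
  have fourierInv_eq := fourierInv_symmGaussianMixture_add_symmCauchyMixture wg μ wc η hpd hγ
  refine ⟨nonneg, fun τ ↦ ?_, ?_⟩
  · rw [integral_mul_cexp_eq_fourierInv, fourierInv_eq]
  · have posDef := isPositiveDefiniteFun_fourierInv_ofReal integrable nonneg
    simp only [Pi.add_apply, fourierInv_eq] at posDef
    exact posDef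
end

section
/- The weighted exponentiated Hamming kernel k_u is a positive semidefinite kernel on X = D_1 × ⋯ × D_U: for every n ∈ ℕ, all points x_1,…,x_n ∈ X and all real coefficients c_1,…,c_n, Σ_{i,j=1}^n c_i c_j k_u(x_i, x_j) ≥ 0. -/
open scoped BigOperators

/-- The weighted exponentiated Hamming kernel on `X = D_1 × ⋯ × D_U`:
`k_u(x, y) = exp((1/U) ∑_i ℓ_i δ(x⁽ⁱ⁾, y⁽ⁱ⁾))`. -/
noncomputable def hammingKernel {U : ℕ} {D : Fin U → Type*} [∀ i, DecidableEq (D i)]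
    (ℓ : Fin U → ℝ) (x y : ∀ i, D i) : ℝ :=
  Real.exp ((1 / (U : ℝ)) * ∑ i, ℓ i * (if x i = y i then (1 : ℝ) else 0))

/-!
Since `exp` turns sums into products, `k_u(x, y)` is the product over the coordinates `i` of
`exp (ℓ i / U)` if `x i = y i` and `1` otherwise. As `ℓ i ≥ 0`, each factor is the constant kernel
`1` plus a nonnegative multiple of `δ`, hence positive semidefinite, and the Schur product theorem
passes this on to the product.
-/

open Matrix
open scoped ComplexOrder

section PosSemidef

variable {α R : Type*}

theorem sum_sum_mul_mul_nonneg_of_posSemidef [CommRing R] [PartialOrder R] [StarRing R]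
    [TrivialStar R] [Fintype α] {M : Matrix α α R} (hM : M.PosSemidef) (c : α → R) :
    0 ≤ ∑ i, ∑ j, c i * c j * M i j := by
  simpa [dotProduct, mulVec, Finset.mul_sum, mul_assoc, mul_comm, mul_left_comm] using
    hM.dotProduct_mulVec_nonneg c

theorem posSemidef_of_const [Ring R] [PartialOrder R] [StarRing R] [StarOrderedRing R]
    {a : R} (ha : 0 ≤ a) : (of fun _ _ : α ↦ a).PosSemidef := by
  have h_unit : (diagonal fun _ : Unit ↦ a).PosSemidef := .diagonal fun _ ↦ ha
  simpa [submatrix] using h_unit.submatrix fun _ : α ↦ ()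

theorem posSemidef_of_ite_eq [Ring R] [PartialOrder R] [StarRing R] [StarOrderedRing R]
    [DecidableEq α] {a b : R} (hb : 0 ≤ b) (hba : b ≤ a) :
    (of fun x y : α ↦ if x = y then a else b).PosSemidef := by
  have h_decomp : (of fun x y : α ↦ if x = y then a else b) =
      (of fun _ _ ↦ b) + diagonal fun _ ↦ a - b := by
    ext x y
    by_cases hxy : x = y <;> simp [hxy]
  rw [h_decomp]
  exact (posSemidef_of_const hb).add (.diagonal fun _ ↦ sub_nonneg.2 hba)

theorem posSemidef_of_prod {ι 𝕜 : Type*} [RCLike 𝕜] (s : Finset ι) {K : ι → Matrix α α 𝕜}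
    (hK : ∀ i ∈ s, (K i).PosSemidef) : (of fun x y ↦ ∏ i ∈ s, K i x y).PosSemidef := by
  induction s using Finset.cons_induction with
  | empty => simpa using posSemidef_of_const zero_le_one
  | cons i s hi ih =>
    rw [Finset.forall_mem_cons] at hK
    simpa only [Finset.prod_cons, hadamard, of_apply] using hK.1.hadamard (ih hK.2)

end PosSemidef

section HammingKernel

variable {U : ℕ} {D : Fin U → Type*} [∀ i, DecidableEq (D i)]

theorem hammingKernel_eq_prod (ℓ : Fin U → ℝ) (x y : ∀ i, D i) :
    hammingKernel ℓ x y = ∏ i, if x i = y i then Real.exp (ℓ i / U) else 1 := by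
  rw [hammingKernel, Finset.mul_sum, Real.exp_sum]
  refine Finset.prod_congr rfl fun i _ ↦ ?_
  split_ifs <;> simp [div_eq_inv_mul]

theorem hammingKernel_psd_general {ℓ : Fin U → ℝ} (hℓ : ∀ i, 0 ≤ ℓ i) :
    (of (hammingKernel (D := D) ℓ)).PosSemidef := by
  have h_coord (i : Fin U) :
      (of fun x y : ∀ i, D i ↦ if x i = y i then Real.exp (ℓ i / U) else 1).PosSemidef :=
    (posSemidef_of_ite_eq zero_le_one <|
      Real.one_le_exp (div_nonneg (hℓ i) U.cast_nonneg)).submatrix fun x : ∀ i, D i ↦ x i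
  have h_prod := posSemidef_of_prod Finset.univ fun i _ ↦ h_coord i
  simpa only [of_apply, ← hammingKernel_eq_prod] using h_prod

end HammingKernel

/-- The weighted exponentiated Hamming kernel is a positive semidefinite kernel on
`X = D_1 × ⋯ × D_U`: for all points `x_1, …, x_n ∈ X` and real coefficients
`c_1, …, c_n`, one has `∑_{i,j} c_i c_j k_u(x_i, x_j) ≥ 0`. -/
theorem hammingKernel_psd {U : ℕ} (hU : 0 < U) (D : Fin U → Type*)
    [∀ i, Fintype (D i)] [∀ i, Nonempty (D i)] [∀ i, DecidableEq (D i)]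
    (ℓ : Fin U → ℝ) (hℓ : ∀ i, 0 ≤ ℓ i)
    (n : ℕ) (x : Fin n → ∀ i, D i) (c : Fin n → ℝ) :
    0 ≤ ∑ i, ∑ j, c i * c j * hammingKernel ℓ (x i) (x j) :=
  sum_sum_mul_mul_nonneg_of_posSemidef ((hammingKernel_psd_general hℓ).submatrix x) c
end

section
/- For every d ≥ 1, a > 0, b > 0 and c ∈ ℝ, the Ackley function satisfies f_Ackley(x) ≥ 0 for all x ∈ ℝ^d, and f_Ackley(x) = 0 if and only if x = 0. -/
open scoped BigOperators

/-- The Ackley function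
`f(x) = -a exp(-b √((1/d) ∑ x_i²)) - exp((1/d) ∑ cos(c x_i)) + a + e` on `ℝ^d`. -/
noncomputable def ackley {d : ℕ} (a b c : ℝ) (x : Fin d → ℝ) : ℝ :=
  -a * Real.exp (-b * Real.sqrt ((1 / (d : ℝ)) * ∑ i, x i ^ 2)) -
    Real.exp ((1 / (d : ℝ)) * ∑ i, Real.cos (c * x i)) + a + Real.exp 1

/-!
Regrouped, the Ackley function is `a (1 - exp (-b r)) + (e - exp m)`, where `r` is the root mean
square of the coordinates `x i` and `m` is the mean of the cosines `cos (c x i)`. The second term is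
nonnegative because `m ≤ 1`. As `1 - exp (-t)` has the sign of `t`, the first term has the sign of
`a b r`, so for `a b > 0` it is positive as soon as `r ≠ 0`, that is, away from the origin.
-/

theorem mul_one_sub_exp_neg_pos {a t : ℝ} (h : 0 < a * t) : 0 < a * (1 - Real.exp (-t)) := by
  rcases mul_pos_iff.1 h with ⟨ha, ht⟩ | ⟨ha, ht⟩
  · exact mul_pos ha (sub_pos.2 (Real.exp_lt_one_iff.2 (neg_neg_iff_pos.2 ht)))
  · exact mul_pos_of_neg_of_neg ha (sub_neg.2 (Real.one_lt_exp_iff.2 (neg_pos.2 ht)))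

theorem expect_cos_le_one {ι : Type*} (s : Finset ι) (θ : ι → ℝ) :
    𝔼 i ∈ s, Real.cos (θ i) ≤ 1 := by
  obtain rfl | hs := s.eq_empty_or_nonempty
  · simp
  · exact Finset.expect_le hs fun i _ ↦ Real.cos_le_one (θ i)

theorem expect_sq_pos {ι R : Type*} [Fintype ι] [Ring R] [LinearOrder R] [IsStrictOrderedRing R]
    [Module ℚ≥0 R] [PosSMulStrictMono ℚ≥0 R] {x : ι → R} (hx : x ≠ 0) : 0 < 𝔼 i, x i ^ 2 := by
  obtain ⟨j, hj⟩ := Function.ne_iff.1 hx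
  exact Finset.expect_pos' (fun i _ ↦ sq_nonneg (x i)) ⟨j, Finset.mem_univ j, sq_pos_of_ne_zero hj⟩

section Ackley

variable {d : ℕ}

theorem ackley_eq_add (a b c : ℝ) (x : Fin d → ℝ) :
    ackley a b c x = a * (1 - Real.exp (-(b * √(𝔼 i, x i ^ 2)))) +
      (Real.exp 1 - Real.exp (𝔼 i, Real.cos (c * x i))) := by
  simp only [ackley, Fintype.expect_eq_sum_div_card, Fintype.card_fin, one_div_mul_eq_div, neg_mul]
  ring

theorem ackley_zero (hd : 1 ≤ d) (a b c : ℝ) : ackley a b c (0 : Fin d → ℝ) = 0 := by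
  have : Nonempty (Fin d) := Fin.pos_iff_nonempty.1 hd
  simp [ackley_eq_add]

theorem ackley_pos {a b : ℝ} (hab : 0 < a * b) (c : ℝ) {x : Fin d → ℝ} (hx : x ≠ 0) :
    0 < ackley a b c x := by
  have h_rms : 0 < √(𝔼 i, x i ^ 2) := Real.sqrt_pos.2 (expect_sq_pos hx)
  have h_exp : 0 < a * (1 - Real.exp (-(b * √(𝔼 i, x i ^ 2)))) :=
    mul_one_sub_exp_neg_pos (mul_assoc a b _ ▸ mul_pos hab h_rms)
  have h_cos : Real.exp (𝔼 i, Real.cos (c * x i)) ≤ Real.exp 1 :=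
    Real.exp_le_exp.2 (expect_cos_le_one _ _)
  rw [ackley_eq_add]
  exact add_pos_of_pos_of_nonneg h_exp (sub_nonneg.2 h_cos)

end Ackley

theorem ackley_nonneg_and_eq_zero_iff_general {d : ℕ} (hd : 1 ≤ d) (a b c : ℝ)
    (hab : 0 < a * b) (x : Fin d → ℝ) :
    0 ≤ ackley a b c x ∧ (ackley a b c x = 0 ↔ x = 0) := by
  rcases eq_or_ne x 0 with rfl | hx
  · have h_zero := ackley_zero hd a b c
    exact ⟨h_zero.ge, iff_of_true h_zero rfl⟩
  · have h_pos := ackley_pos hab c hx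
    exact ⟨h_pos.le, iff_of_false h_pos.ne' hx⟩

/-- For every `d ≥ 1`, `a > 0`, `b > 0` and `c ∈ ℝ`, the Ackley function is
nonnegative on `ℝ^d`, and vanishes exactly at `x = 0`. -/
theorem ackley_nonneg_and_eq_zero_iff {d : ℕ} (hd : 1 ≤ d) (a b c : ℝ)
    (ha : 0 < a) (hb : 0 < b) (x : Fin d → ℝ) :
    0 ≤ ackley a b c x ∧ (ackley a b c x = 0 ↔ x = 0) :=
  ackley_nonneg_and_eq_zero_iff_general hd a b c (mul_pos ha hb) x
end
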